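/- arXiv:2407.18165 — 9 statements merged into one kernel-verified Lean document; each statement's English description precedes it below -/
import Mathlib

section
/- Let γ > 1, K > 0, C₁ ≠ 0, l ∈ ℝ and C₂ ∈ ℝ be constants, and let V : (0,∞) → ℝ. Suppose ρ, v : (0,∞) → ℝ satisfy ρ(r) > 0 for all r > 0, and with the local sound speed defined by c(r)² = K γ ρ(r)^{γ−1}, suppose for every r > 0 the mass-flux relation r ρ(r) v(r) = C₁ and the Bernoulli relation (1/2) v(r)² + l²/(2r²) + c(r)²/(γ−1) + V(r) = C₂ hold. Then V(r) tends to −∞ as r → 0⁺. -/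
open Filter

/-- Theorem 2: a steady axisymmetric physical flow with nonzero mass flow rate on the
maximal domain `r > 0` forces the external potential to diverge to `-∞` at the origin. -/
theorem external_potential_diverges (γ K C₁ l C₂ : ℝ) (hγ : 1 < γ) (hK : 0 < K)
    (hC₁ : C₁ ≠ 0) (V ρ v c : ℝ → ℝ)
    (hρ : ∀ r ∈ Set.Ioi (0 : ℝ), 0 < ρ r)
    (hc : ∀ r ∈ Set.Ioi (0 : ℝ), (c r) ^ 2 = K * γ * ρ r ^ (γ - 1))
    (hmass : ∀ r ∈ Set.Ioi (0 : ℝ), r * ρ r * v r = C₁)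
    (hbern : ∀ r ∈ Set.Ioi (0 : ℝ),
      (1 / 2) * (v r) ^ 2 + l ^ 2 / (2 * r ^ 2) + (c r) ^ 2 / (γ - 1) + V r = C₂) :
    Tendsto V (nhdsWithin 0 (Set.Ioi 0)) atBot := by
  have hg : 0 < γ - 1 := by linarith
  have hKg : 0 < K * γ := by positivity
  rw [tendsto_atBot]
  intro B
  obtain ⟨T, hT, hT0⟩ := (((tendsto_rpow_atTop hg).eventually_ge_atTop
    ((C₂ - B) * (γ - 1) / (K * γ))).and (eventually_gt_atTop (0 : ℝ))).exists
  have hC : 0 < C₁ ^ 2 := by positivity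
  have hev : ∀ᶠ r : ℝ in nhdsWithin 0 (Set.Ioi 0),
      r ^ 2 * T ^ 2 * (2 * (C₂ - B)) < C₁ ^ 2 := by
    have hcont : Continuous fun r : ℝ => r ^ 2 * T ^ 2 * (2 * (C₂ - B)) := by fun_prop
    have h0 := (hcont.tendsto 0).eventually_lt_const (u := C₁ ^ 2) (by simpa using hC)
    exact h0.filter_mono nhdsWithin_le_nhds
  filter_upwards [hev, self_mem_nhdsWithin] with r hr hr0
  have hr0' : 0 < r := hr0
  have hp := hρ r hr0
  have hb := hbern r hr0
  have hm := hmass r hr0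
  have h1 : 0 ≤ l ^ 2 / (2 * r ^ 2) := by positivity
  have h2 : 0 ≤ (c r) ^ 2 / (γ - 1) := by positivity
  have h3 : 0 ≤ (v r) ^ 2 := by positivity
  rcases le_total T (ρ r) with h | h
  · have h4 : T ^ (γ - 1) ≤ ρ r ^ (γ - 1) := Real.rpow_le_rpow hT0.le h hg.le
    have h5 : C₂ - B ≤ (c r) ^ 2 / (γ - 1) := by
      rw [le_div_iff₀ hg, hc r hr0]
      have h6 := (div_le_iff₀ hKg).1 (hT.trans h4)
      linarith
    linarith
  · have h4 : C₁ ^ 2 ≤ r ^ 2 * T ^ 2 * (v r) ^ 2 := by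
      rw [← hm, mul_pow, mul_pow]
      gcongr
    have h5 : 2 * (C₂ - B) < (v r) ^ 2 :=
      lt_of_mul_lt_mul_left (hr.trans_le h4) (by positivity)
    linarith
end

section
/- Let γ > 1, K > 0, C₁ ≠ 0, l ∈ ℝ, C₂ ∈ ℝ and R > 0, and let V : (0,R) → ℝ. Suppose ρ, v : (0,R) → ℝ satisfy ρ(r) > 0 for all r ∈ (0,R), and with c(r)² = K γ ρ(r)^{γ−1}, suppose for every r ∈ (0,R) that r ρ(r) v(r) = C₁ and (1/2) v(r)² + l²/(2r²) + c(r)²/(γ−1) + V(r) = C₂. Then V(r) tends to −∞ as r → 0⁺. -/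
open Filter

/-- Corollary to Theorem 2: if the steady physical flow with nonzero mass flow rate only
exists on a bounded domain `0 < r < R`, the external potential still diverges to `-∞`
as `r → 0⁺`. -/
theorem external_potential_diverges_bounded_domain (γ K C₁ l C₂ R : ℝ) (hγ : 1 < γ)
    (hK : 0 < K) (hC₁ : C₁ ≠ 0) (hR : 0 < R) (V ρ v c : ℝ → ℝ)
    (hρ : ∀ r ∈ Set.Ioo (0 : ℝ) R, 0 < ρ r)
    (hc : ∀ r ∈ Set.Ioo (0 : ℝ) R, (c r) ^ 2 = K * γ * ρ r ^ (γ - 1))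
    (hmass : ∀ r ∈ Set.Ioo (0 : ℝ) R, r * ρ r * v r = C₁)
    (hbern : ∀ r ∈ Set.Ioo (0 : ℝ) R,
      (1 / 2) * (v r) ^ 2 + l ^ 2 / (2 * r ^ 2) + (c r) ^ 2 / (γ - 1) + V r = C₂) :
    Tendsto V (nhdsWithin 0 (Set.Ioi 0)) atBot := by
  rw [tendsto_atBot]
  intro M
  set A : ℝ := |C₂ - M| with hA
  have hA0 : 0 ≤ A := abs_nonneg _
  have hA1 : C₂ - M ≤ A := le_abs_self _
  have hg : 0 < γ - 1 := by linarith
  have hKγ : 0 < K * γ := by positivity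
  set B : ℝ := A * (γ - 1) / (K * γ) with hB
  have hB0 : 0 ≤ B := by positivity
  set D : ℝ := B ^ (γ - 1)⁻¹ with hD
  have hD0 : 0 ≤ D := Real.rpow_nonneg hB0 _
  have hC : 0 < |C₁| := abs_pos.mpr hC₁
  set δ : ℝ := |C₁| / (D * (A + 1) + 1) with hδ
  have hδ0 : 0 < δ := by positivity
  filter_upwards [Ioo_mem_nhdsGT (lt_min hR hδ0)] with r hr
  have hr0 : 0 < r := hr.1
  have hrR : r ∈ Set.Ioo (0 : ℝ) R := ⟨hr.1, hr.2.trans_le (min_le_left _ _)⟩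
  have hrδ : r < δ := hr.2.trans_le (min_le_right _ _)
  by_contra! hV
  have hb := hbern r hrR
  have h1 : 0 ≤ l ^ 2 / (2 * r ^ 2) := by positivity
  have h2 : 0 ≤ (c r) ^ 2 / (γ - 1) := by positivity
  have h3 : 0 ≤ (v r) ^ 2 := by positivity
  have hv : |v r| ≤ A + 1 := by
    refine abs_le_of_sq_le_sq ?_ (by linarith : (0 : ℝ) ≤ A + 1)
    nlinarith
  have hcc : (c r) ^ 2 / (γ - 1) ≤ A := by linarith
  have hρ0 := hρ r hrR
  have hρB : ρ r ^ (γ - 1) ≤ B := by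
    rw [hB, le_div_iff₀ hKγ]
    rw [div_le_iff₀ hg, hc r hrR] at hcc
    linarith
  have hρD : ρ r ≤ D := by
    have := Real.rpow_le_rpow (Real.rpow_nonneg hρ0.le _) hρB (inv_nonneg.mpr hg.le)
    rwa [Real.rpow_rpow_inv hρ0.le hg.ne'] at this
  have hm : |C₁| = r * (ρ r * |v r|) := by
    rw [← hmass r hrR, abs_mul, abs_mul, abs_of_pos hr0, abs_of_pos hρ0, mul_assoc]
  have h4 : ρ r * |v r| ≤ D * (A + 1) := by gcongr
  have h5 : r * (ρ r * |v r|) ≤ r * (D * (A + 1)) := by gcongr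
  rw [hδ, lt_div_iff₀ (by positivity)] at hrδ
  linarith
end

section
/- Let γ > 1, V₀ > 0, α > 0, C₂ > 0, and suppose α(γ+1) > 2(γ−1). Consider the external potential V(r) = −V₀/r^α and angular momentum l = 0. Then there is a unique r_H > 0 satisfying the horizon equation V′(r_H) r_H³ − (2(γ−1)/(γ+1)) (C₂ − V(r_H)) r_H² = 0, namely r_H = ( ((γ+1)α − 2(γ−1)) V₀ / (2(γ−1) C₂) )^{1/α}. In particular, for α = 1 and 1 < γ < 3, r_H = (3−γ) V₀ / (2(γ−1) C₂). -/
theorem horizon_lhs_eq (γ V₀ α C₂ r : ℝ) (hγ : 1 < γ) (hr : 0 < r) :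
    deriv (fun r : ℝ => -V₀ / r ^ α) r * r ^ 3
          - (2 * (γ - 1) / (γ + 1)) * (C₂ - (-V₀ / r ^ α)) * r ^ 2
      = r ^ 2 / (r ^ α * (γ + 1)) *
        (((γ + 1) * α - 2 * (γ - 1)) * V₀ - r ^ α * (2 * (γ - 1) * C₂)) := by
  have hp : 0 < r ^ α := Real.rpow_pos_of_pos hr α
  have h1 : HasDerivAt (fun r : ℝ => r ^ α) (α * r ^ (α - 1)) r :=
    Real.hasDerivAt_rpow_const (Or.inl hr.ne')
  have h2 := (hasDerivAt_const r (-V₀)).div h1 hp.ne'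
  have h3 : deriv (fun r : ℝ => -V₀ / r ^ α) r
      = (0 * r ^ α - -V₀ * (α * r ^ (α - 1))) / (r ^ α) ^ 2 := h2.deriv
  rw [h3, Real.rpow_sub_one hr.ne']
  have hg : γ + 1 ≠ 0 := by linarith
  have hp' := hp.ne'
  have hr' := hr.ne'
  generalize r ^ α = p at *
  field_simp
  ring

/-- Eq. (rhal) of the Supplemental Material: for the power-law potential
`V(r) = -V₀/r^α` and `l = 0`, the horizon equation has the unique positive solution
`r_H = (((γ+1)α - 2(γ-1)) V₀ / (2(γ-1) C₂))^{1/α}`; for `α = 1` and `1 < γ < 3`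
this is `(3-γ)V₀/(2(γ-1)C₂)`. -/
theorem horizon_radius_power_law_potential (γ V₀ α C₂ : ℝ) (hγ : 1 < γ) (hV₀ : 0 < V₀)
    (hα : 0 < α) (hC₂ : 0 < C₂) (hαγ : 2 * (γ - 1) < α * (γ + 1)) :
    (∀ r_H : ℝ,
      (0 < r_H ∧
        deriv (fun r : ℝ => -V₀ / r ^ α) r_H * r_H ^ 3
          - (2 * (γ - 1) / (γ + 1)) * (C₂ - (-V₀ / r_H ^ α)) * r_H ^ 2 = 0)
      ↔ r_H = (((γ + 1) * α - 2 * (γ - 1)) * V₀ / (2 * (γ - 1) * C₂)) ^ (1 / α)) ∧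
    (α = 1 → γ < 3 →
      (((γ + 1) * α - 2 * (γ - 1)) * V₀ / (2 * (γ - 1) * C₂)) ^ (1 / α)
        = (3 - γ) * V₀ / (2 * (γ - 1) * C₂)) := by
  have hD : 0 < 2 * (γ - 1) * C₂ := mul_pos (by linarith) hC₂
  have hN : 0 < ((γ + 1) * α - 2 * (γ - 1)) * V₀ := mul_pos (by linarith) hV₀
  have hQ := div_pos hN hD
  refine ⟨fun r => ?_, ?_⟩
  · have key : ∀ r : ℝ, 0 < r →
        (deriv (fun r : ℝ => -V₀ / r ^ α) r * r ^ 3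
          - (2 * (γ - 1) / (γ + 1)) * (C₂ - (-V₀ / r ^ α)) * r ^ 2 = 0 ↔
        r ^ α = ((γ + 1) * α - 2 * (γ - 1)) * V₀ / (2 * (γ - 1) * C₂)) := by
      intro r hr
      rw [horizon_lhs_eq γ V₀ α C₂ r hγ hr, eq_div_iff hD.ne']
      have hp : 0 < r ^ α := Real.rpow_pos_of_pos hr α
      have hc : r ^ 2 / (r ^ α * (γ + 1)) ≠ 0 :=
        (div_pos (pow_pos hr 2) (mul_pos hp (by linarith))).ne'
      rw [mul_eq_zero, or_iff_right hc, sub_eq_zero, eq_comm]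
    constructor
    · rintro ⟨hr, h⟩
      rw [← (key r hr).1 h, ← Real.rpow_mul hr.le, mul_one_div_cancel hα.ne', Real.rpow_one]
    · intro h
      have hr : 0 < r := h ▸ Real.rpow_pos_of_pos hQ _
      refine ⟨hr, (key r hr).2 ?_⟩
      rw [h, ← Real.rpow_mul hQ.le, one_div_mul_cancel hα.ne', Real.rpow_one]
  · rintro rfl _
    rw [div_one, Real.rpow_one]
    congr 2
    ring
end

section
/- Let γ > 1, V₀ > 0, α > 0 and r_H > 0. Consider V(r) = −V₀/r^α (so V′(r) = αV₀ r^{−α−1} and V″(r) = −α(α+1)V₀ r^{−α−2}), angular momentum l = 0, and horizon sound speed c_H² = r_H V′(r_H) = αV₀/r_H^α. Define Δ = (4/(γ+1)) ( −V″(r_H) + (V′(r_H)/r_H)·(1−3γ)/(γ+1) ) and C = (1/(γ+1)) ( γ c_H²/r_H² + V″(r_H) ). Then Δ > 0 if and only if α > 2(γ−1)/(γ+1), and C < 0 if and only if α > γ − 1. -/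
/-- Eqs. (alga) and (CC) of the Supplemental Material: sign criteria for the
discriminant `Δ` and the coefficient `C` of the sonic-point quadratic, for the
power-law potential `V(r) = -V₀/r^α` with `l = 0` and `c_H² = r_H V'(r_H)`. -/
theorem sonic_point_classification_power_law (γ V₀ α r_H : ℝ) (hγ : 1 < γ)
    (hV₀ : 0 < V₀) (hα : 0 < α) (hrH : 0 < r_H) :
    (0 < (4 / (γ + 1)) *
        (-(-α * (α + 1) * V₀ * r_H ^ (-α - 2))
          + ((α * V₀ * r_H ^ (-α - 1)) / r_H) * (1 - 3 * γ) / (γ + 1))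
      ↔ 2 * (γ - 1) / (γ + 1) < α) ∧
    ((1 / (γ + 1)) *
        (γ * (r_H * (α * V₀ * r_H ^ (-α - 1))) / r_H ^ 2
          + (-α * (α + 1) * V₀ * r_H ^ (-α - 2))) < 0
      ↔ γ - 1 < α) := by
  have hg : 0 < γ + 1 := by linarith
  have hp : r_H ^ (-α - 1) = r_H ^ (-α - 2) * r_H := by
    rw [← Real.rpow_add_one hrH.ne']
    congr 1
    ring
  have hX : 0 < r_H ^ (-α - 2) := Real.rpow_pos_of_pos hrH _
  rw [hp]
  generalize r_H ^ (-α - 2) = X at hX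
  constructor
  · have e : (4 / (γ + 1)) * (-(-α * (α + 1) * V₀ * X)
          + ((α * V₀ * (X * r_H)) / r_H) * (1 - 3 * γ) / (γ + 1))
        = (4 / (γ + 1) * (α * V₀ * X)) * (α - 2 * (γ - 1) / (γ + 1)) := by
      field_simp
      ring
    have hk : 0 < 4 / (γ + 1) * (α * V₀ * X) := by positivity
    rw [e, mul_pos_iff_of_pos_left hk, sub_pos]
  · have e : (1 / (γ + 1)) * (γ * (r_H * (α * V₀ * (X * r_H))) / r_H ^ 2
          + (-α * (α + 1) * V₀ * X))
        = -((1 / (γ + 1) * (α * V₀ * X)) * (α - (γ - 1))) := by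
      field_simp
      ring
    have hk : 0 < 1 / (γ + 1) * (α * V₀ * X) := by positivity
    rw [e, neg_lt_zero, mul_pos_iff_of_pos_left hk, sub_pos]
end

section
/- Let C₂ ∈ ℝ and r₀ > 0, and let c, v : (0, r₀) → ℝ satisfy, for all r ∈ (0, r₀): c(r) > 0, v(r) > c(r), c(r)² v(r) r = 1, and (1/2) v(r)² + c(r)² − 1/r = C₂. Then v(r)·√r → √2 and c(r)·r^{1/4} → 2^{−1/4} as r → 0⁺. -/
open Filter

/-- Near-singularity asymptotics of the transonic BEC flow (γ = 2, units with
C₁' = V₀ = 1): `v(r)√r → √2` and `c(r) r^{1/4} → 2^{-1/4}` as `r → 0⁺`. -/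
theorem bec_near_singularity_asymptotics (C₂ r₀ : ℝ) (hr₀ : 0 < r₀)
    (c v : ℝ → ℝ)
    (hc : ∀ r ∈ Set.Ioo (0 : ℝ) r₀, 0 < c r)
    (hsupersonic : ∀ r ∈ Set.Ioo (0 : ℝ) r₀, c r < v r)
    (hmass : ∀ r ∈ Set.Ioo (0 : ℝ) r₀, (c r) ^ 2 * v r * r = 1)
    (hbern : ∀ r ∈ Set.Ioo (0 : ℝ) r₀, (1 / 2) * (v r) ^ 2 + (c r) ^ 2 - 1 / r = C₂) :
    Tendsto (fun r => v r * Real.sqrt r) (nhdsWithin 0 (Set.Ioi 0))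
      (nhds (Real.sqrt 2)) ∧
    Tendsto (fun r => c r * r ^ ((1 : ℝ) / 4)) (nhdsWithin 0 (Set.Ioi 0))
      (nhds ((2 : ℝ) ^ (-(1 : ℝ) / 4))) := by
  have hev : ∀ᶠ r in nhdsWithin (0:ℝ) (Set.Ioi 0), r ∈ Set.Ioo (0:ℝ) r₀ :=
    Ioo_mem_nhdsGT hr₀
  have hid : Tendsto (fun r : ℝ => r) (nhdsWithin (0:ℝ) (Set.Ioi 0)) (nhds 0) :=
    tendsto_id.mono_left nhdsWithin_le_nhds
  have hCr : Tendsto (fun r : ℝ => 1 + C₂ * r) (nhdsWithin (0:ℝ) (Set.Ioi 0)) (nhds 1) := by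
    simpa using (hid.const_mul C₂).const_add 1
  have hhalf : ∀ᶠ r in nhdsWithin (0:ℝ) (Set.Ioi 0), 1 / 2 < 1 + C₂ * r :=
    hCr.eventually (lt_mem_nhds (by norm_num))
  have hsq : Tendsto (fun r : ℝ => Real.sqrt (3 * r)) (nhdsWithin (0:ℝ) (Set.Ioi 0))
      (nhds 0) := by
    simpa using (hid.const_mul 3).sqrt
  have key : ∀ r ∈ Set.Ioo (0:ℝ) r₀,
      v r ^ 2 * r = 2 * (1 + C₂ * r - c r ^ 2 * r) := by
    intro r hr
    have hb := hbern r hr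
    have h0 : r ≠ 0 := hr.1.ne'
    rw [← hb]
    field_simp
    ring
  have hc2 : Tendsto (fun r : ℝ => c r ^ 2 * r) (nhdsWithin (0:ℝ) (Set.Ioi 0)) (nhds 0) := by
    refine tendsto_of_tendsto_of_tendsto_of_le_of_le' tendsto_const_nhds hsq ?_ ?_
    · filter_upwards [hev] with r hr
      have := hr.1
      positivity
    · filter_upwards [hev, hhalf] with r hr hh
      have h0 := hr.1
      have hcp := hc r hr
      have hlt := hsupersonic r hr
      have hm := hmass r hr
      have hk := key r hr
      apply Real.le_sqrt_of_sq_le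
      have h1 : c r ^ 2 * r ≤ v r ^ 2 * r := by gcongr
      have h2 : 1 / 2 ≤ 3 / 2 * (v r ^ 2 * r) := by linarith
      have h3 : (c r ^ 2 * r) ^ 2 * (v r ^ 2 * r) = r := by
        calc _ = (c r ^ 2 * v r * r) ^ 2 * r := by ring
          _ = r := by rw [hm]; ring
      nlinarith [mul_le_mul_of_nonneg_left h2 (sq_nonneg (c r ^ 2 * r))]
  have hv : Tendsto (fun r => v r * Real.sqrt r) (nhdsWithin 0 (Set.Ioi 0))
      (nhds (Real.sqrt 2)) := by
    have h : Tendsto (fun r => Real.sqrt (2 * (1 + C₂ * r - c r ^ 2 * r)))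
        (nhdsWithin 0 (Set.Ioi 0)) (nhds (Real.sqrt 2)) := by
      simpa using ((hCr.sub hc2).const_mul 2).sqrt
    refine h.congr' ?_
    filter_upwards [hev] with r hr
    have hvp : 0 ≤ v r := ((hc r hr).trans (hsupersonic r hr)).le
    rw [← key r hr, Real.sqrt_mul (sq_nonneg _), Real.sqrt_sq hvp]
  refine ⟨hv, ?_⟩
  have h2 : Real.sqrt 2 ≠ 0 := by positivity
  have h := (hv.inv₀ h2).sqrt
  have hlim : Real.sqrt (Real.sqrt 2)⁻¹ = (2 : ℝ) ^ (-(1 : ℝ) / 4) := by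
    rw [Real.sqrt_eq_rpow, Real.sqrt_eq_rpow, ← Real.rpow_neg (by norm_num),
      ← Real.rpow_mul (by norm_num)]
    norm_num
  rw [hlim] at h
  refine h.congr' ?_
  filter_upwards [hev] with r hr
  have h0 := hr.1
  have hcp := hc r hr
  have hvp : 0 < v r := hcp.trans (hsupersonic r hr)
  have hm := hmass r hr
  have hq : (r ^ ((1 : ℝ) / 4)) ^ 2 = Real.sqrt r := by
    rw [← Real.rpow_natCast, ← Real.rpow_mul h0.le, Real.sqrt_eq_rpow]
    norm_num
  have hs : Real.sqrt r ^ 2 = r := Real.sq_sqrt h0.le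
  have he : (v r * Real.sqrt r)⁻¹ = (c r * r ^ ((1 : ℝ) / 4)) ^ 2 := by
    rw [mul_pow, hq]
    apply inv_eq_of_mul_eq_one_right
    calc _ = c r ^ 2 * v r * Real.sqrt r ^ 2 := by ring
      _ = 1 := by rw [hs, hm]
  rw [he, Real.sqrt_sq (by positivity)]
end

section
/- Let C₂ ∈ ℝ and r₀ > 0, and let c, v : (0, r₀) → ℝ satisfy, for all r ∈ (0, r₀): c(r) > 0, v(r) > c(r), c(r)² v(r) r = 1, and (1/2) v(r)² + c(r)² − 1/r = C₂. Then the Mach number M(r) = v(r)/c(r) satisfies M(r) = 1/(c(r)³ r) for all r ∈ (0, r₀), and M(r) → +∞ as r → 0⁺. -/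
open Filter

/-- In the transonic BEC flow (γ = 2, units with C₁' = V₀ = 1), the Mach number
`M = v/c` satisfies `M = 1/(c³ r)` and diverges as `r → 0⁺`. -/
theorem bec_mach_number_diverges (C₂ r₀ : ℝ) (hr₀ : 0 < r₀)
    (c v : ℝ → ℝ)
    (hc : ∀ r ∈ Set.Ioo (0 : ℝ) r₀, 0 < c r)
    (hsupersonic : ∀ r ∈ Set.Ioo (0 : ℝ) r₀, c r < v r)
    (hmass : ∀ r ∈ Set.Ioo (0 : ℝ) r₀, (c r) ^ 2 * v r * r = 1)
    (hbern : ∀ r ∈ Set.Ioo (0 : ℝ) r₀, (1 / 2) * (v r) ^ 2 + (c r) ^ 2 - 1 / r = C₂) :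
    (∀ r ∈ Set.Ioo (0 : ℝ) r₀, v r / c r = 1 / ((c r) ^ 3 * r)) ∧
    Tendsto (fun r => v r / c r) (nhdsWithin 0 (Set.Ioi 0)) atTop := by
  refine ⟨?_, ?_⟩
  · intro r hr
    have h1 := hc r hr
    have h2 := hr.1
    have h3 := hmass r hr
    rw [div_eq_div_iff h1.ne' (by positivity)]
    linear_combination c r * h3
  · rw [tendsto_atTop]
    intro B
    have hK1 : 1 ≤ max B 1 := le_max_right _ _
    have hKB : B ≤ max B 1 := le_max_left _ _
    generalize max B 1 = K at hK1 hKB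
    have hK : 0 < K := by linarith
    have e1 : Set.Ioo (0 : ℝ) r₀ ∈ nhdsWithin 0 (Set.Ioi 0) := Ioo_mem_nhdsGT hr₀
    have e2 : Set.Ioo (0 : ℝ) (1 / (2 * (|C₂| + 1))) ∈ nhdsWithin 0 (Set.Ioi 0) :=
      Ioo_mem_nhdsGT (by positivity)
    have e3 : Set.Ioo (0 : ℝ) (1 / (27 * K ^ 4)) ∈ nhdsWithin 0 (Set.Ioi 0) :=
      Ioo_mem_nhdsGT (by positivity)
    filter_upwards [e1, e2, e3] with r hr hr2 hr3
    have h1 := hc r hr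
    have h2 := hr.1
    have h3 := hmass r hr
    have h4 := hsupersonic r hr
    have h5 := hbern r hr
    have h6 := hr2.2
    have h7 := hr3.2
    rw [lt_div_iff₀ (by positivity)] at h6 h7
    have hv : 0 < v r := h1.trans h4
    refine hKB.trans ?_
    rw [le_div_iff₀ h1]
    by_contra! hlt
    have hcv : (c r) ^ 2 < (v r) ^ 2 := by gcongr
    have h8 : (1 / 2) * (v r) ^ 2 * r + (c r) ^ 2 * r - 1 = C₂ * r := by
      rw [← h5]; field_simp
    have h9 : -(1 / 2) ≤ C₂ * r := by
      have := mul_le_mul_of_nonneg_right (neg_abs_le C₂) h2.le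
      nlinarith
    have h10 : 1 / 3 < (v r) ^ 2 * r := by
      have := mul_lt_mul_of_pos_right hcv h2
      linarith
    have h11 : (v r) ^ 2 < K ^ 2 * (c r) ^ 2 := by
      rw [← mul_pow]; gcongr
    have h12 : (v r) ^ 2 * (v r * r) < K ^ 2 := by
      have := mul_lt_mul_of_pos_right h11 (mul_pos hv h2)
      have e : K ^ 2 * c r ^ 2 * (v r * r) = K ^ 2 := by linear_combination K ^ 2 * h3
      linarith
    have h13 : v r < 3 * K ^ 2 := by
      have := mul_lt_mul_of_pos_left h10 hv
      linarith
    have h14 : (v r) ^ 2 < (3 * K ^ 2) ^ 2 := by gcongr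
    have := mul_lt_mul_of_pos_right h14 h2
    nlinarith
end

section
/- Let C₂ ∈ ℝ, r₀ > 0 and 0 < r_T < r₀, and let c, v : (0, r₀) → ℝ be continuous with, for all r ∈ (0, r₀): c(r) > 0, v(r) > c(r), c(r)² v(r) r = 1, and (1/2) v(r)² + c(r)² − 1/r = C₂. Then the improper integral ∫₀^{r_T} c(r)³ dr converges (is finite). -/
/-- Boundedness of the affine parameter interval (Eq. (8) of the paper, `dλ = c³ dr`):
for the transonic BEC flow the improper integral `∫₀^{r_T} c(r)³ dr` converges, so a
radial null geodesic reaches arbitrarily close to the singularity `r = 0` within a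
bounded affine interval. -/
theorem affine_parameter_interval_bounded (C₂ r₀ r_T : ℝ) (hr₀ : 0 < r₀)
    (hrT : 0 < r_T) (hrTr₀ : r_T < r₀)
    (c v : ℝ → ℝ)
    (hccont : ContinuousOn c (Set.Ioo 0 r₀)) (hvcont : ContinuousOn v (Set.Ioo 0 r₀))
    (hc : ∀ r ∈ Set.Ioo (0 : ℝ) r₀, 0 < c r)
    (hsupersonic : ∀ r ∈ Set.Ioo (0 : ℝ) r₀, c r < v r)
    (hmass : ∀ r ∈ Set.Ioo (0 : ℝ) r₀, (c r) ^ 2 * v r * r = 1)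
    (hbern : ∀ r ∈ Set.Ioo (0 : ℝ) r₀, (1 / 2) * (v r) ^ 2 + (c r) ^ 2 - 1 / r = C₂) :
    MeasureTheory.IntegrableOn (fun r => (c r) ^ 3) (Set.Ioo 0 r_T) := by
  have hsub : Set.Ioo 0 r_T ⊆ Set.Ioo 0 r₀ := Set.Ioo_subset_Ioo_right hrTr₀.le
  have hpow : MeasureTheory.IntegrableOn (fun r : ℝ => r ^ (-(3/4) : ℝ)) (Set.Ioo 0 r_T) :=
    (intervalIntegral.integrableOn_Ioo_rpow_iff hrT).2 (by norm_num)
  have hconst : MeasureTheory.IntegrableOn (fun _ : ℝ => 2 * (|C₂| + 1)) (Set.Ioo 0 r_T) :=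
    MeasureTheory.integrableOn_const (by simp)
  have hg : MeasureTheory.IntegrableOn
      (fun r : ℝ => 4 * r ^ (-(3/4) : ℝ) + 2 * (|C₂| + 1)) (Set.Ioo 0 r_T) :=
    (hpow.const_mul 4).add hconst
  refine MeasureTheory.Integrable.mono' hg
    (((hccont.mono hsub).pow 3).aestronglyMeasurable measurableSet_Ioo) ?_
  refine (MeasureTheory.ae_restrict_iff' measurableSet_Ioo).2 (Filter.Eventually.of_forall ?_)
  intro r hr
  have hr' := hsub hr
  have hr0 : 0 < r := hr.1
  have h1 := hc r hr'
  have h2 := hsupersonic r hr'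
  have h3 := hmass r hr'
  have h4 := hbern r hr'
  have hs0 : 0 < r ^ (-(1/4) : ℝ) := Real.rpow_pos_of_pos hr0 _
  have hs3 : r ^ (-(3/4) : ℝ) = (r ^ (-(1/4) : ℝ)) ^ 3 := by
    rw [← Real.rpow_natCast, ← Real.rpow_mul hr0.le]; norm_num
  have hs4 : (r ^ (-(1/4) : ℝ)) ^ 4 = 1 / r := by
    rw [← Real.rpow_natCast, ← Real.rpow_mul hr0.le]; norm_num [Real.rpow_neg_one]
  rw [Real.norm_of_nonneg (by positivity), hs3]
  generalize r ^ (-(1/4) : ℝ) = s at hs0 hs4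
  have habs := abs_nonneg C₂
  have hneg := neg_abs_le C₂
  have hvr : c r ^ 2 * v r = 1 / r := by field_simp; linarith
  have hs3pos : 0 < s ^ 3 := by positivity
  have hv0 : 0 < v r := h1.trans h2
  rcases le_total (1 / r) (2 * (|C₂| + 1)) with h | h
  · have : c r ^ 3 ≤ c r ^ 2 * v r := by
      rw [pow_succ]; gcongr
    linarith
  · have hcv : c r ^ 2 ≤ v r ^ 2 := by gcongr
    have hv : 1 / r ≤ 3 * v r ^ 2 := by linarith
    have hc4 : c r ^ 4 ≤ 3 * s ^ 4 := by
      rw [hs4]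
      have e : c r ^ 4 * v r ^ 2 = (1 / r) * (1 / r) := by rw [← hvr]; ring
      have hp : 0 < 1 / r := by positivity
      have : c r ^ 4 * v r ^ 2 ≤ 3 * (1 / r) * v r ^ 2 := by
        rw [e]; nlinarith
      exact le_of_mul_le_mul_right this (by positivity)
    have hcs : c r ≤ 3 / 2 * s := by
      refine le_of_pow_le_pow_left₀ (n := 4) (by norm_num) (by positivity) ?_
      have : 0 < s ^ 4 := by positivity
      rw [mul_pow]; linarith
    have : c r ^ 3 ≤ (3 / 2 * s) ^ 3 := by gcongr
    rw [mul_pow] at this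
    linarith
end

section
/- Let C₂ ∈ ℝ, r₀ > 0 and 0 < r_T < r₀, and let c, v : (0, r₀) → ℝ be continuous with, for all r ∈ (0, r₀): c(r) > 0, v(r) > c(r), c(r)² v(r) r = 1, and (1/2) v(r)² + c(r)² − 1/r = C₂. Then the improper integrals Δt₊ = ∫₀^{r_T} dr/(v(r) + c(r)) and Δt₋ = ∫₀^{r_T} dr/(v(r) − c(r)) both converge (are finite), and Δt₋ > Δt₊. -/
open MeasureTheory

/-- Eq. (reachingS) of the Supplemental Material: the laboratory times
`Δt₊ = ∫₀^{r_T} dr/(v+c)` and `Δt₋ = ∫₀^{r_T} dr/(v-c)` for radially out/inward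
pointing null rays to reach the origin from the trapped surface are both finite,
and `Δt₋ > Δt₊`. -/
theorem lab_time_to_singularity_finite (C₂ r₀ r_T : ℝ) (hr₀ : 0 < r₀)
    (hrT : 0 < r_T) (hrTr₀ : r_T < r₀)
    (c v : ℝ → ℝ)
    (hccont : ContinuousOn c (Set.Ioo 0 r₀)) (hvcont : ContinuousOn v (Set.Ioo 0 r₀))
    (hc : ∀ r ∈ Set.Ioo (0 : ℝ) r₀, 0 < c r)
    (hsupersonic : ∀ r ∈ Set.Ioo (0 : ℝ) r₀, c r < v r)
    (hmass : ∀ r ∈ Set.Ioo (0 : ℝ) r₀, (c r) ^ 2 * v r * r = 1)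
    (hbern : ∀ r ∈ Set.Ioo (0 : ℝ) r₀, (1 / 2) * (v r) ^ 2 + (c r) ^ 2 - 1 / r = C₂) :
    IntegrableOn (fun r => 1 / (v r + c r)) (Set.Ioo 0 r_T) ∧
    IntegrableOn (fun r => 1 / (v r - c r)) (Set.Ioo 0 r_T) ∧
    (∫ r in Set.Ioo 0 r_T, 1 / (v r + c r)) < ∫ r in Set.Ioo 0 r_T, 1 / (v r - c r) := by
  have hsub : Set.Ioo 0 r_T ⊆ Set.Ioo 0 r₀ := fun x hx => ⟨hx.1, hx.2.trans hrTr₀⟩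
  have hcm : ContinuousOn (fun r => 1 / (v r - c r)) (Set.Ioo 0 r₀) :=
    continuousOn_const.div (hvcont.sub hccont) (fun r hr => by
      have := hsupersonic r hr
      exact (sub_pos.2 this).ne')
  have hcp : ContinuousOn (fun r => 1 / (v r + c r)) (Set.Ioo 0 r₀) :=
    continuousOn_const.div (hvcont.add hccont) (fun r hr => by
      have := hsupersonic r hr
      have := hc r hr
      have : 0 < v r + c r := by linarith
      exact this.ne')
  have hlt : ∀ r ∈ Set.Ioo (0 : ℝ) r₀, 1 / (v r + c r) < 1 / (v r - c r) := fun r hr => by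
    have h1 := hsupersonic r hr
    have h2 := hc r hr
    exact one_div_lt_one_div_of_lt (by linarith) (by linarith)
  have hpos : ∀ r ∈ Set.Ioo (0 : ℝ) r₀, 0 < 1 / (v r + c r) := fun r hr => by
    have h1 := hsupersonic r hr
    have h2 := hc r hr
    exact one_div_pos.2 (by linarith)
  obtain ⟨δ, hδ0, hδ1, hδ2⟩ : ∃ δ : ℝ, 0 < δ ∧ δ ≤ 1 / 1000 ∧ |C₂| * δ ≤ 1 / 10 := by
    refine ⟨min (1 / 1000) (1 / (10 * (|C₂| + 1))), by positivity, min_le_left _ _, ?_⟩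
    have h0 := abs_nonneg C₂
    calc |C₂| * min (1 / 1000) (1 / (10 * (|C₂| + 1)))
        ≤ (|C₂| + 1) * (1 / (10 * (|C₂| + 1))) := by
          gcongr
          · linarith
          · exact min_le_right _ _
      _ = 1 / 10 := by field_simp
  have hnear : ∀ r ∈ Set.Ioo (0 : ℝ) r₀, r < δ → 1 / (v r - c r) ≤ 1 := by
    intro r hr hrδ
    have h1 := hsupersonic r hr
    have h2 := hc r hr
    have h3 := hmass r hr
    have h4 := hbern r hr
    have hr0 : 0 < r := hr.1
    generalize v r = V at *
    generalize c r = K at *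
    have hV0 : 0 < V := h2.trans h1
    have hV : 10 < V := by
      by_contra! hV
      have e1 : K ^ 2 ≤ 100 := by nlinarith
      have e2 : K ^ 2 * V ≤ 1000 := by nlinarith [sq_nonneg K]
      have e3 : r < 1 / 1000 := lt_of_lt_of_le hrδ hδ1
      have e4 : K ^ 2 * V * r ≤ 1000 * r := by gcongr
      linarith
    have hC : -(1 / 10) ≤ C₂ * r := by
      have a1 : |C₂| * r ≤ |C₂| * δ := by gcongr
      have a2 : -|C₂| * r ≤ C₂ * r := by
        gcongr
        exact neg_abs_le C₂
      linarith
    have hb : (1 / 2) * (V ^ 2 * r) + K ^ 2 * r - 1 = C₂ * r := by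
      rw [← h4]; field_simp
    have hK : K ^ 2 * r ≤ 1 / 10 := by
      have : 0 < K ^ 2 * r := by positivity
      nlinarith
    have hVr : (4 * K) ^ 2 * r ≤ V ^ 2 * r := by nlinarith
    have h5 : (4 * K) ^ 2 ≤ V ^ 2 := le_of_mul_le_mul_right hVr hr0
    have h6 : 4 * K ≤ V := by
      exact (sq_le_sq₀ (by positivity) hV0.le).1 h5
    rw [div_le_one (by linarith)]
    linarith
  obtain ⟨M, hM⟩ : ∃ M : ℝ, ∀ r ∈ Set.Ioo (0 : ℝ) r_T, 1 / (v r - c r) ≤ M := by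
    have hK : ContinuousOn (fun r => 1 / (v r - c r)) (Set.Icc δ r_T) :=
      hcm.mono (fun x hx => ⟨hδ0.trans_le hx.1, hx.2.trans_lt hrTr₀⟩)
    obtain ⟨B, hB⟩ := isCompact_Icc.bddAbove_image hK
    refine ⟨max 1 B, fun r hr => ?_⟩
    rcases lt_or_ge r δ with h | h
    · exact (hnear r (hsub hr) h).trans (le_max_left _ _)
    · exact (hB ⟨r, ⟨h, hr.2.le⟩, rfl⟩).trans (le_max_right _ _)
  have hIp : IntegrableOn (fun r => 1 / (v r + c r)) (Set.Ioo 0 r_T) := by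
    refine IntegrableOn.of_bound (by simp)
      ((hcp.mono hsub).aestronglyMeasurable measurableSet_Ioo) M ?_
    refine (ae_restrict_iff' measurableSet_Ioo).2 (Filter.Eventually.of_forall fun r hr => ?_)
    rw [Real.norm_of_nonneg (hpos r (hsub hr)).le]
    exact (hlt r (hsub hr)).le.trans (hM r hr)
  have hIm : IntegrableOn (fun r => 1 / (v r - c r)) (Set.Ioo 0 r_T) := by
    refine IntegrableOn.of_bound (by simp)
      ((hcm.mono hsub).aestronglyMeasurable measurableSet_Ioo) M ?_
    refine (ae_restrict_iff' measurableSet_Ioo).2 (Filter.Eventually.of_forall fun r hr => ?_)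
    rw [Real.norm_of_nonneg ((hpos r (hsub hr)).trans (hlt r (hsub hr))).le]
    exact hM r hr
  refine ⟨hIp, hIm, ?_⟩
  have hint := hIm.sub hIp
  rw [← sub_pos, ← integral_sub hIm hIp, ← integral_Ioc_eq_integral_Ioo,
    ← intervalIntegral.integral_of_le hrT.le]
  refine intervalIntegral.intervalIntegral_pos_of_pos_on ?_ ?_ hrT
  · rw [intervalIntegrable_iff_integrableOn_Ioo_of_le hrT.le]
    exact hint
  · intro r hr
    exact sub_pos.2 (hlt r (hsub hr))
end

section
/- Let C₂ ∈ ℝ and r₀ > 0, and let c, v : (0, r₀) → ℝ satisfy, for all r ∈ (0, r₀): c(r) > 0, v(r) > c(r), c(r)² v(r) r = 1, and (1/2) v(r)² + c(r)² − 1/r = C₂. Define the Mach number M(r) = v(r)/c(r) and the null expansion Θ(r) = (1/2) ( −M(r) + ( 1/M(r) − 1/(r v(r) c(r)) ) / ( 1 − 1/M(r)² ) ). Then Θ(r) → −∞ as r → 0⁺. -/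
open Filter

/-- The null expansion of the radial null geodesic congruences in the BEC analogue
black hole, `Θ = (1/2)(-M + (1/M - 1/(r v c))/(1 - 1/M²))` with Mach number `M = v/c`,
tends to `-∞` as `r → 0⁺`, identifying `r = 0` as a caustic. -/
theorem null_expansion_diverges_at_singularity (C₂ r₀ : ℝ) (hr₀ : 0 < r₀)
    (c v : ℝ → ℝ)
    (hc : ∀ r ∈ Set.Ioo (0 : ℝ) r₀, 0 < c r)
    (hsupersonic : ∀ r ∈ Set.Ioo (0 : ℝ) r₀, c r < v r)
    (hmass : ∀ r ∈ Set.Ioo (0 : ℝ) r₀, (c r) ^ 2 * v r * r = 1)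
    (hbern : ∀ r ∈ Set.Ioo (0 : ℝ) r₀, (1 / 2) * (v r) ^ 2 + (c r) ^ 2 - 1 / r = C₂) :
    Tendsto (fun r =>
        (1 / 2) * (-(v r / c r)
          + (1 / (v r / c r) - 1 / (r * v r * c r)) / (1 - 1 / (v r / c r) ^ 2)))
      (nhdsWithin 0 (Set.Ioi 0)) atBot := by
  rw [tendsto_atBot]
  intro b
  obtain ⟨K, hK⟩ : ∃ K : ℝ, K = 2 + 2 * |b| := ⟨_, rfl⟩
  have hb0 := abs_nonneg b
  have hb1 := neg_abs_le b
  have hK2 : 2 ≤ K := by linarith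
  have hK4 : 0 < 8 * K ^ 4 := by positivity
  have hC4 : 0 < 4 * (|C₂| + 1) := by positivity
  have e1 : ∀ᶠ r in nhdsWithin (0 : ℝ) (Set.Ioi 0), r ∈ Set.Ioo (0 : ℝ) r₀ :=
    Ioo_mem_nhdsGT hr₀
  have e2 : ∀ᶠ r in nhdsWithin (0 : ℝ) (Set.Ioi 0), r ∈ Set.Ioo (0 : ℝ) (1 / (8 * K ^ 4)) :=
    Ioo_mem_nhdsGT (by positivity)
  have e3 : ∀ᶠ r in nhdsWithin (0 : ℝ) (Set.Ioi 0),
      r ∈ Set.Ioo (0 : ℝ) (1 / (4 * (|C₂| + 1))) :=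
    Ioo_mem_nhdsGT (by positivity)
  filter_upwards [e1, e2, e3] with r h1 h2 h3
  have hr := h1.1
  have hc := hc r h1
  have hs := hsupersonic r h1
  have hm := hmass r h1
  have hB := hbern r h1
  have h2 := (lt_div_iff₀ hK4).1 h2.2
  have h3 := (lt_div_iff₀ hC4).1 h3.2
  generalize c r = x at *
  generalize v r = y at *
  have hy : 0 < y := hc.trans hs
  have hCr : -(1 / 4) ≤ C₂ * r := by
    have := mul_le_mul_of_nonneg_right (neg_abs_le C₂) hr.le
    nlinarith
  have hB' : (1 / 2) * y ^ 2 * r + x ^ 2 * r = 1 + C₂ * r := by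
    rw [← hB]; field_simp; ring
  have hxy : x ^ 2 * r ≤ y ^ 2 * r := by gcongr
  have hyr : 1 / 2 ≤ y ^ 2 * r := by linarith
  obtain ⟨M, hM⟩ : ∃ M : ℝ, M = y / x := ⟨_, rfl⟩
  have hM0 : 0 < M := by rw [hM]; positivity
  have hM2 : M ^ 2 = y * (y ^ 2 * r) := by
    rw [hM, div_pow, div_eq_iff (by positivity)]
    linear_combination (-y ^ 2) * hm
  have hM2' : y / 2 ≤ M ^ 2 := by rw [hM2]; nlinarith
  have hM4 : y ^ 2 / 4 ≤ M ^ 4 := by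
    have := pow_le_pow_left₀ (by positivity) hM2' 2
    nlinarith
  have hKM : K ^ 4 ≤ M ^ 4 := by
    have a : K ^ 4 * r ≤ M ^ 4 * r := by
      have := mul_le_mul_of_nonneg_right hM4 hr.le
      linarith
    exact le_of_mul_le_mul_right a hr
  have hKM' : K ≤ M := le_of_pow_le_pow_left₀ (by norm_num) hM0.le hKM
  have hx : 1 / (r * y * x) = x := by
    rw [div_eq_iff (by positivity)]; linarith
  rw [← hM, hx]
  have hM2le : 2 ≤ M := hK2.trans hKM'
  have hi : 1 / M ≤ 1 / 2 := one_div_le_one_div_of_le (by norm_num) hM2le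
  have hi0 : 0 < 1 / M := by positivity
  have hi2 : 1 / M ^ 2 ≤ 1 / 4 := by
    rw [← one_div_pow]; nlinarith
  have hd : (1 / M - x) / (1 - 1 / M ^ 2) ≤ 2 := by
    rw [div_le_iff₀ (by linarith)]; linarith
  linarith
end
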